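/- Let M be a given consumer rate budget. For every κ₀ > 0 and every α with 0 < α < 1/2 there exist a positive integer N₀ and a constant ε₀ > 0 such that for N > N₀ the following holds: if Ω* = (μ*_infl, Λ*, X*) is a Nash equilibrium of the proxy game such that Σ_{z≠y} I(μ*_infl(z)) ≥ α·N·κ₀ for all y ∈ C, then μ*(y_infl|y) > ε₀ for all y ∈ C. -/

import Mathlib

open scoped Classical

noncomputable section

/-- Points of the `d`-dimensional Euclidean space. -/
abbrev E (d : ℕ) : Type := EuclideanSpace ℝ (Fin d)

/-- An allocation `Ω = (μ_infl, Λ, X)`: `muI z` is the rate with which the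
influencer follows producer `z`; `mu z y` is the rate with which consumer `y`
follows producer `z` directly; `muY y` is the rate with which consumer `y`
follows the influencer; `lam y` is the rate with which consumer `y` follows
outside sources; `X z` is the content topic created by producer `z`. -/
structure Alloc (d : ℕ) where
  muI : E d → ℝ
  mu  : E d → E d → ℝ
  muY : E d → ℝ
  lam : E d → ℝ
  X   : E d → E d

variable (d : ℕ)

/-- Admissibility of an allocation: nonnegative rates, the rate budget `M_infl`
of the influencer, the rate budget `M` of each consumer, and contents in `T`. -/
def Admissible (T : Set (E d)) (C : Finset (E d)) (Minfl M : ℝ) (Ω : Alloc d) : Prop :=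
  (∀ z ∈ C, 0 ≤ Ω.muI z) ∧ ((∑ z ∈ C, Ω.muI z) ≤ Minfl) ∧
  (∀ y ∈ C, (∀ z ∈ C.erase y, 0 ≤ Ω.mu z y) ∧ 0 ≤ Ω.muY y ∧ 0 ≤ Ω.lam y ∧
    ((∑ z ∈ C.erase y, Ω.mu z y) + Ω.muY y + Ω.lam y ≤ M)) ∧
  (∀ z ∈ C, Ω.X z ∈ T)

/-- `B(z|y) = q(x(z)|z) · p(x(z)|y)` where `p(x|y) = f(d(x,y))`, `q(x|y) = g(d(x,y))`. -/
def Bfun (f g : ℝ → ℝ) (Ω : Alloc d) (z y : E d) : ℝ :=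
  g (dist (Ω.X z) z) * f (dist (Ω.X z) y)

/-- The consumption utility `U_c(y|Ω)` of consumer `y`. -/
def Uc (f g I : ℝ → ℝ) (C : Finset (E d)) (rp r0 B0 : ℝ) (Ω : Alloc d) (y : E d) : ℝ :=
  rp * ∑ z ∈ C.erase y, Bfun d f g Ω z y * I (Ω.muI z) * I (Ω.muY y)
  + rp * ∑ z ∈ C.erase y, Bfun d f g Ω z y * I (Ω.mu z y)
  + r0 * B0 * I (Ω.lam y)

/-- The influencer utility `U_infl(μ_infl|Λ,X)`. -/
def Uinfl (f g I : ℝ → ℝ) (C : Finset (E d)) (rp : ℝ) (Ω : Alloc d) : ℝ :=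
  rp * ∑ z ∈ C, ∑ y ∈ C.erase z, Bfun d f g Ω z y * I (Ω.muI z) * I (Ω.muY y)

/-- The producer utility (social support) `U_p(z|Ω)` of producer `z`. -/
def Up (f g I : ℝ → ℝ) (C : Finset (E d)) (rp : ℝ) (Ω : Alloc d) (z : E d) : ℝ :=
  rp * ∑ y ∈ C.erase z, Bfun d f g Ω z y * I (Ω.muI z) * I (Ω.muY y)
  + rp * ∑ y ∈ C.erase z, Bfun d f g Ω z y * I (Ω.mu z y)

/-- The social welfare `Φ(Ω) = Σ_{y∈C} U_c(y|Ω)`. -/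
def Phi (f g I : ℝ → ℝ) (C : Finset (E d)) (rp r0 B0 : ℝ) (Ω : Alloc d) : ℝ :=
  ∑ y ∈ C, Uc d f g I C rp r0 B0 Ω y

/-- The allocation obtained from `Ω` when consumer `y` unilaterally deviates to
the rates `(mu', muY', lam')`. -/
def consDeviate (Ω : Alloc d) (y : E d) (mu' : E d → ℝ) (muY' lam' : ℝ) : Alloc d :=
  { Ω with
    mu := fun z w => if w = y then mu' z else Ω.mu z w,
    muY := Function.update Ω.muY y muY',
    lam := Function.update Ω.lam y lam' }

/-- The influencer's rates are a best response: no feasible deviation of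
`μ_infl` increases the influencer utility. -/
def InflBR (f g I : ℝ → ℝ) (C : Finset (E d)) (rp Minfl : ℝ) (Ω : Alloc d) : Prop :=
  ∀ μI' : E d → ℝ, (∀ z ∈ C, 0 ≤ μI' z) → ((∑ z ∈ C, μI' z) ≤ Minfl) →
    Uinfl d f g I C rp { Ω with muI := μI' } ≤ Uinfl d f g I C rp Ω

/-- Consumer `y`'s rates are a best response in the game with perfect
information: no feasible deviation increases the consumption utility. -/
def ConsBR (f g I : ℝ → ℝ) (C : Finset (E d)) (rp r0 B0 M : ℝ) (Ω : Alloc d) (y : E d) : Prop :=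
  ∀ (mu' : E d → ℝ) (muY' lam' : ℝ),
    (∀ z ∈ C.erase y, 0 ≤ mu' z) → 0 ≤ muY' → 0 ≤ lam' →
    ((∑ z ∈ C.erase y, mu' z) + muY' + lam' ≤ M) →
    Uc d f g I C rp r0 B0 (consDeviate d Ω y mu' muY' lam') y ≤ Uc d f g I C rp r0 B0 Ω y

/-- Producer `z`'s content is a best response: no deviation of the content
topic within `T` increases the producer's social support. -/
def ProdBR (f g I : ℝ → ℝ) (T : Set (E d)) (C : Finset (E d)) (rp : ℝ) (Ω : Alloc d) (z : E d) : Prop :=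
  ∀ x ∈ T, Up d f g I C rp { Ω with X := Function.update Ω.X z x } z ≤ Up d f g I C rp Ω z

/-- Nash equilibrium of the game with perfect information. -/
def NashPerfect (f g I : ℝ → ℝ) (T : Set (E d)) (C : Finset (E d))
    (rp r0 B0 Minfl M : ℝ) (Ω : Alloc d) : Prop :=
  Admissible d T C Minfl M Ω ∧
  InflBR d f g I C rp Minfl Ω ∧
  (∀ y ∈ C, ConsBR d f g I C rp r0 B0 M Ω y) ∧
  (∀ z ∈ C, ProdBR d f g I T C rp Ω z)

/-- Admissibility in the proxy game: in addition, consumers follow no producer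
directly. -/
def ProxyAdmissible (T : Set (E d)) (C : Finset (E d)) (Minfl M : ℝ) (Ω : Alloc d) : Prop :=
  Admissible d T C Minfl M Ω ∧ ∀ y ∈ C, ∀ z ∈ C.erase y, Ω.mu z y = 0

/-- Consumer `y`'s rates are a best response in the proxy game, where the
consumer may only follow the influencer and outside sources. -/
def ProxyConsBR (f g I : ℝ → ℝ) (C : Finset (E d)) (rp r0 B0 M : ℝ) (Ω : Alloc d) (y : E d) : Prop :=
  ∀ (muY' lam' : ℝ), 0 ≤ muY' → 0 ≤ lam' → muY' + lam' ≤ M →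
    Uc d f g I C rp r0 B0 (consDeviate d Ω y (fun _ => 0) muY' lam') y ≤
      Uc d f g I C rp r0 B0 Ω y

/-- Nash equilibrium of the proxy game. -/
def NashProxy (f g I : ℝ → ℝ) (T : Set (E d)) (C : Finset (E d))
    (rp r0 B0 Minfl M : ℝ) (Ω : Alloc d) : Prop :=
  ProxyAdmissible d T C Minfl M Ω ∧
  InflBR d f g I C rp Minfl Ω ∧
  (∀ y ∈ C, ProxyConsBR d f g I C rp r0 B0 M Ω y) ∧
  (∀ z ∈ C, ProdBR d f g I T C rp Ω z)

/-- Tie-break convention (Assumption 4): if no consumer follows the influencer,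
the influencer splits its rate budget uniformly. -/
def TieBreak (C : Finset (E d)) (Minfl : ℝ) (Ω : Alloc d) : Prop :=
  (∑ y ∈ C, Ω.muY y) = 0 → ∀ z ∈ C, Ω.muI z = Minfl / (C.card : ℝ)

/-!
If consumer `y` follows the influencer at rate `μ`, moving the whole budget `M` to the influencer
gains `r_p (I M - I μ) Σ_{z ≠ y} B(z|y) I(μ_infl(z))` and costs at most `r_0 B_0 I M`. As `T` is
bounded, `B(z|y)` is bounded below by a positive constant, so the gain grows linearly in `N` as long
as `I M - I μ` stays away from zero, whereas the cost does not depend on `N`. Hence for large `N` an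
equilibrium rate `μ` cannot lie below a prescribed `ε < M`.
-/

section ConsumerBestResponse

variable {d} {f g I : ℝ → ℝ} {T : Set (E d)} {C : Finset (E d)} {rp r0 B0 Minfl M : ℝ}
  {Ω : Alloc d} {y z : E d}

variable (f g I C Ω y) in
/-- The sum `Σ_{z ≠ y} I(μ_infl(z)) B(z|y)`, by which `r_p I(μ(y_infl|y))` is multiplied in the
utility of consumer `y`: the value to `y` of the content relayed by the influencer. -/
def relayValue : ℝ :=
  ∑ z ∈ C.erase y, Bfun d f g Ω z y * I (Ω.muI z)

lemma Uc_eq_relayValue_of_mu_eq_zero (hI_zero : I 0 = 0)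
    (hmu : ∀ z ∈ C.erase y, Ω.mu z y = 0) :
    Uc d f g I C rp r0 B0 Ω y
      = rp * relayValue f g I C Ω y * I (Ω.muY y) + r0 * B0 * I (Ω.lam y) := by
  have direct_eq_zero : ∑ z ∈ C.erase y, Bfun d f g Ω z y * I (Ω.mu z y) = 0 :=
    Finset.sum_eq_zero fun z hz => by rw [hmu z hz, hI_zero, mul_zero]
  rw [Uc, direct_eq_zero, ← Finset.sum_mul, relayValue]
  ring

lemma Uc_consDeviate_zero (hI_zero : I 0 = 0) (muY' lam' : ℝ) :
    Uc d f g I C rp r0 B0 (consDeviate d Ω y (fun _ => 0) muY' lam') y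
      = rp * relayValue f g I C Ω y * I muY' + r0 * B0 * I lam' := by
  rw [Uc_eq_relayValue_of_mu_eq_zero hI_zero fun _ _ => if_pos rfl]
  simp [consDeviate, relayValue, Bfun]

lemma mul_le_Bfun {D : ℝ} (hf : AntitoneOn f (Set.Ici 0)) (hg : AntitoneOn g (Set.Ici 0))
    (hfD : 0 ≤ f D) (hgD : 0 ≤ g D) (hz : dist (Ω.X z) z ≤ D) (hy : dist (Ω.X z) y ≤ D) :
    g D * f D ≤ Bfun d f g Ω z y := by
  have hD : 0 ≤ D := dist_nonneg.trans hz
  have hg_le : g D ≤ g (dist (Ω.X z) z) := hg dist_nonneg hD hz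
  have hf_le : f D ≤ f (dist (Ω.X z) y) := hf dist_nonneg hD hy
  exact mul_le_mul hg_le hf_le hfD (hgD.trans hg_le)

lemma mul_sum_le_relayValue {b : ℝ} (hI : ∀ z ∈ C.erase y, 0 ≤ I (Ω.muI z))
    (hb : ∀ z ∈ C.erase y, b ≤ Bfun d f g Ω z y) :
    b * ∑ z ∈ C.erase y, I (Ω.muI z) ≤ relayValue f g I C Ω y := by
  rw [Finset.mul_sum]
  exact Finset.sum_le_sum fun z hz => mul_le_mul_of_nonneg_right (hb z hz) (hI z hz)

lemma Admissible.diam_mul_sum_le_relayValue (hΩ : Admissible d T C Minfl M Ω)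
    (hf : AntitoneOn f (Set.Ici 0)) (hf_diam : 0 ≤ f (Metric.diam T))
    (hg : AntitoneOn g (Set.Ici 0)) (hg_diam : 0 ≤ g (Metric.diam T))
    (hI_mono : MonotoneOn I (Set.Ici 0)) (hI_zero : I 0 = 0)
    (hT : Bornology.IsBounded T) (hCT : ↑C ⊆ T) (hy : y ∈ C) :
    g (Metric.diam T) * f (Metric.diam T) * ∑ z ∈ C.erase y, I (Ω.muI z)
      ≤ relayValue f g I C Ω y := by
  obtain ⟨hmuI, -, -, hX⟩ := hΩ
  have hI_nonneg : ∀ z ∈ C, 0 ≤ I (Ω.muI z) := fun z hz =>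
    hI_zero.ge.trans (hI_mono Set.self_mem_Ici (hmuI z hz) (hmuI z hz))
  have hBfun : ∀ z ∈ C, g (Metric.diam T) * f (Metric.diam T) ≤ Bfun d f g Ω z y := fun z hz =>
    mul_le_Bfun hf hg hf_diam hg_diam
      (Metric.dist_le_diam_of_mem hT (hX z hz) (hCT hz))
      (Metric.dist_le_diam_of_mem hT (hX z hz) (hCT hy))
  exact mul_sum_le_relayValue (fun z hz => hI_nonneg z (Finset.mem_of_mem_erase hz))
    fun z hz => hBfun z (Finset.mem_of_mem_erase hz)

lemma ProxyConsBR.relayValue_mul_sub_le (hBR : ProxyConsBR d f g I C rp r0 B0 M Ω y)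
    (hΩ : ProxyAdmissible d T C Minfl M Ω) (hy : y ∈ C) (hI_mono : MonotoneOn I (Set.Ici 0))
    (hI_zero : I 0 = 0) (hr0B0 : 0 ≤ r0 * B0) :
    rp * relayValue f g I C Ω y * (I M - I (Ω.muY y)) ≤ r0 * B0 * I M := by
  obtain ⟨⟨-, -, hcons, -⟩, hmu⟩ := hΩ
  obtain ⟨-, hmuY, hlam, hbudget⟩ := hcons y hy
  rw [Finset.sum_eq_zero (hmu y hy)] at hbudget
  have hlam_le : Ω.lam y ≤ M := by linarith
  have hM : 0 ≤ M := hlam.trans hlam_le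
  have deviation_le := hBR M 0 hM le_rfl (add_zero M).le
  rw [Uc_consDeviate_zero hI_zero, Uc_eq_relayValue_of_mu_eq_zero hI_zero (hmu y hy), hI_zero]
    at deviation_le
  calc rp * relayValue f g I C Ω y * (I M - I (Ω.muY y))
      ≤ r0 * B0 * I (Ω.lam y) := by linarith
    _ ≤ r0 * B0 * I M := mul_le_mul_of_nonneg_left (hI_mono hlam hM hlam_le) hr0B0

lemma ProxyConsBR.lt_muY_of_cost_lt_gain {ε : ℝ} (hBR : ProxyConsBR d f g I C rp r0 B0 M Ω y)
    (hΩ : ProxyAdmissible d T C Minfl M Ω) (hy : y ∈ C) (hI_mono : MonotoneOn I (Set.Ici 0))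
    (hI_zero : I 0 = 0) (hr0B0 : 0 ≤ r0 * B0) (hvalue : 0 ≤ rp * relayValue f g I C Ω y)
    (hcost_lt_gain : r0 * B0 * I M < rp * relayValue f g I C Ω y * (I M - I ε)) :
    ε < Ω.muY y := by
  by_contra! hle
  have ⟨⟨_, _, hcons, _⟩, _⟩ := hΩ
  have hmuY : 0 ≤ Ω.muY y := (hcons y hy).2.1
  have hI_le : I (Ω.muY y) ≤ I ε := hI_mono hmuY (hmuY.trans hle) hle
  refine hcost_lt_gain.not_ge ?_
  calc rp * relayValue f g I C Ω y * (I M - I ε)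
      ≤ rp * relayValue f g I C Ω y * (I M - I (Ω.muY y)) := by gcongr
    _ ≤ r0 * B0 * I M := hBR.relayValue_mul_sub_le hΩ hy hI_mono hI_zero hr0B0

end ConsumerBestResponse

theorem stmt15_general {d : ℕ} {f g I : ℝ → ℝ}
    (hf_anti : AntitoneOn f (Set.Ici 0)) (hf_pos : ∀ t ∈ Set.Ici (0 : ℝ), 0 < f t)
    (hg_anti : AntitoneOn g (Set.Ici 0)) (hg_pos : ∀ t ∈ Set.Ici (0 : ℝ), 0 < g t)
    (hI_mono : StrictMonoOn I (Set.Ici 0)) (hI_zero : I 0 = 0)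
    {T : Set (E d)} (hT : Bornology.IsBounded T)
    {rp r0 B0 : ℝ} (hrp : 0 < rp) (hr0B0 : 0 ≤ r0 * B0)
    {M ε : ℝ} (hε : 0 ≤ ε) (hεM : ε < M) {κ : ℝ} (hκ : 0 < κ) :
    ∃ N₀ : ℕ, ∀ C : Finset (E d), ↑C ⊆ T → N₀ < C.card →
      ∀ (Minfl : ℝ) (Ω : Alloc d), ProxyAdmissible d T C Minfl M Ω →
        ∀ y ∈ C, ProxyConsBR d f g I C rp r0 B0 M Ω y →
          κ * (C.card : ℝ) ≤ ∑ z ∈ C.erase y, I (Ω.muI z) → ε < Ω.muY y := by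
  have hf_diam : 0 < f (Metric.diam T) := hf_pos _ Metric.diam_nonneg
  have hg_diam : 0 < g (Metric.diam T) := hg_pos _ Metric.diam_nonneg
  set b : ℝ := g (Metric.diam T) * f (Metric.diam T)
  have hb : 0 < b := mul_pos hg_diam hf_diam
  have hI_gap : 0 < I M - I ε := sub_pos.2 (hI_mono hε (hε.trans hεM.le) hεM)
  obtain ⟨N₀, hN₀⟩ := exists_nat_gt (r0 * B0 * I M / (rp * (b * κ) * (I M - I ε)))
  rw [div_lt_iff₀ (by positivity)] at hN₀
  refine ⟨N₀, fun C hCT hcard Minfl Ω hΩ y hy hBR hsum => ?_⟩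
  have hvalue : b * (κ * C.card) ≤ relayValue f g I C Ω y :=
    (mul_le_mul_of_nonneg_left hsum hb.le).trans <|
      hΩ.1.diam_mul_sum_le_relayValue hf_anti hf_diam.le hg_anti hg_diam.le hI_mono.monotoneOn
        hI_zero hT hCT hy
  have hvalue_nonneg : 0 ≤ relayValue f g I C Ω y := le_trans (by positivity) hvalue
  refine hBR.lt_muY_of_cost_lt_gain hΩ hy hI_mono.monotoneOn hI_zero hr0B0 (by positivity) ?_
  calc r0 * B0 * I M
      < N₀ * (rp * (b * κ) * (I M - I ε)) := hN₀
    _ ≤ C.card * (rp * (b * κ) * (I M - I ε)) := by gcongr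
    _ = rp * (b * (κ * C.card)) * (I M - I ε) := by ring
    _ ≤ rp * relayValue f g I C Ω y * (I M - I ε) := by gcongr

/-- **Lemma 11.** Let `M` be a given consumer rate budget.  For
every `κ₀ > 0` and every `α` with `0 < α < 1/2` there exist a positive integer
`N₀` and a constant `ε₀ > 0` such that for `N > N₀` the following holds: if
`Ω* = (μ*_infl, Λ*, X*)` is a Nash equilibrium of the proxy game such that
`Σ_{z≠y} I(μ*_infl(z)) ≥ α·N·κ₀` for all `y ∈ C`, then `μ*(y_infl|y) > ε₀`
for all `y ∈ C`. -/
theorem stmt15 (d : ℕ) (f g I : ℝ → ℝ)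
    (hf_cont : ContinuousOn f (Set.Ici 0)) (hf_anti : StrictAntiOn f (Set.Ici 0))
    (hf_rng : ∀ t ∈ Set.Ici (0 : ℝ), f t ∈ Set.Ioc (0 : ℝ) 1)
    (hg_cont : ContinuousOn g (Set.Ici 0)) (hg_anti : StrictAntiOn g (Set.Ici 0))
    (hg_rng : ∀ t ∈ Set.Ici (0 : ℝ), g t ∈ Set.Ioc (0 : ℝ) 1)
    (hI_diff : ContDiffOn ℝ 1 I (Set.Ici 0))
    (hI_mono : StrictMonoOn I (Set.Ici 0))
    (hI_conc : StrictConcaveOn ℝ (Set.Ici 0) I)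
    (hI_zero : I 0 = 0)
    (hI_lim : Filter.Tendsto I Filter.atTop (nhds 1))
    (T : Set (E d)) (hT_ne : T.Nonempty) (hT_conv : Convex ℝ T) (hT_comp : IsCompact T)
    (rp r0 B0 : ℝ) (hrp : 0 < rp) (hr0 : 0 < r0) (hB0 : 0 < B0)
    (M : ℝ) (hM : 0 < M)
    (κ₀ : ℝ) (hκ₀ : 0 < κ₀) (α : ℝ) (hα0 : 0 < α) (hα : α < 1 / 2) :
    ∃ (N₀ : ℕ) (ε₀ : ℝ), 0 < ε₀ ∧
      ∀ C : Finset (E d), ↑C ⊆ T → N₀ < C.card →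
        ∀ Minfl : ℝ, 0 < Minfl →
          ∀ Ω : Alloc d, NashProxy d f g I T C rp r0 B0 Minfl M Ω →
            (∀ y ∈ C, α * (C.card : ℝ) * κ₀ ≤ ∑ z ∈ C.erase y, I (Ω.muI z)) →
            ∀ y ∈ C, ε₀ < Ω.muY y := by
  obtain ⟨N₀, hN₀⟩ := stmt15_general hf_anti.antitoneOn (fun t ht => (hf_rng t ht).1)
    hg_anti.antitoneOn (fun t ht => (hg_rng t ht).1) hI_mono hI_zero hT_comp.isBounded hrp
    (mul_pos hr0 hB0).le (half_pos hM).le (half_lt_self hM) (mul_pos hα0 hκ₀)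
  exact ⟨N₀, M / 2, half_pos hM, fun C hCT hcard Minfl _ Ω hΩ hsum y hy =>
    hN₀ C hCT hcard Minfl Ω hΩ.1 y hy (hΩ.2.2.1 y hy) (mul_right_comm α _ κ₀ ▸ hsum y hy)⟩
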